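/- Let Γ be a non-elementary Gromov hyperbolic group with an invariant roughly geodesic strongly hyperbolic metric d of growth exponent δ, and let φ be a pointwise nonnegative positive definite function on Γ (with GNS representation π_φ). Then δ(φ) = δ if and only if the trivial representation is weakly contained in π_φ. Equivalently, δ(φ) < δ if and only if π_φ has a spectral gap. -/

import Mathlib

open Filter MeasureTheory
open scoped RealInnerProductSpace ENNReal

/-- An invariant metric on a discrete group with uniformly locally finite balls. -/
structure InvMetric (Γ : Type*) [Group Γ] where
  d : Γ → Γ → ℝ
  symm : ∀ g h, d g h = d h g
  triangle : ∀ g h k, d g k ≤ d g h + d h k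
  refl : ∀ g, d g g = 0
  eq_of_dist_eq_zero : ∀ g h, d g h = 0 → g = h
  invariant : ∀ g x y, d (g * x) (g * y) = d x y
  finiteBalls : ∀ r : ℝ, {g : Γ | d g 1 ≤ r}.Finite

variable {Γ : Type*} [Group Γ]

/-- The growth exponent `δ = limsup_r (1/r) log |B_r|`. -/
noncomputable def growthExp (M : InvMetric Γ) : ℝ :=
  limsup (fun r : ℝ => Real.log (Nat.card {g : Γ | M.d g 1 ≤ r}) / r) atTop

/-- The critical exponent of a nonnegative function: the abscissa of convergence of
the Poincaré series `∑_g e^{-t d(g,e)} f(g)` (infimum over nonnegative `t`). -/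
noncomputable def critExp (M : InvMetric Γ) (f : Γ → ℝ) : ℝ :=
  sInf {t : ℝ | 0 ≤ t ∧ Summable fun g : Γ => Real.exp (-t * M.d g 1) * f g}

/-- The operator norm of `λ(f)` on `ℓ²(Γ)` for the left regular representation,
realized as the supremum of `|⟨λ(f)u, w⟩|` over finitely supported `u, w` of
`ℓ²`-norm at most one. -/
noncomputable def regNorm (f : Γ →₀ ℝ) : ℝ :=
  sSup {c : ℝ | ∃ u w : Γ →₀ ℝ,
    (∑ x ∈ u.support, u x ^ 2) ≤ 1 ∧ (∑ x ∈ w.support, w x ^ 2) ≤ 1 ∧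
    c = |∑ g ∈ f.support, ∑ x ∈ w.support, f g * u (g⁻¹ * x) * w x|}

/-- `π(f) = ∑_g f(g) π(g)` as a bounded operator. -/
noncomputable def opOf {H : Type*} [NormedAddCommGroup H] [InnerProductSpace ℝ H]
    (π : Γ →* (H ≃ₗᵢ[ℝ] H)) (f : Γ →₀ ℝ) : H →L[ℝ] H :=
  ∑ g ∈ f.support, f g • ((π g).toContinuousLinearEquiv : H →L[ℝ] H)

/-- The Gromov product `(x,y)_o`. -/
noncomputable def gromov (M : InvMetric Γ) (x y o : Γ) : ℝ :=
  (M.d x o + M.d y o - M.d x y) / 2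

/-- Gromov hyperbolicity. -/
def IsHyperbolic (M : InvMetric Γ) : Prop :=
  ∃ C : ℝ, ∀ x y z o : Γ, min (gromov M x z o) (gromov M z y o) - C ≤ gromov M x y o

/-- Strong hyperbolicity in the sense of Mineyev--Yu / Nica--Spakula. -/
def IsStronglyHyperbolic (M : InvMetric Γ) : Prop :=
  ∃ ε > (0 : ℝ), ∀ x y z o : Γ,
    Real.exp (-ε * gromov M x y o) ≤
      Real.exp (-ε * gromov M x z o) + Real.exp (-ε * gromov M z y o)

/-- Roughly geodesic. -/
def IsRoughlyGeodesic (M : InvMetric Γ) : Prop :=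
  ∃ C : ℝ, 0 ≤ C ∧ ∀ x y : Γ, ∀ t : ℝ, 0 ≤ t → t ≤ M.d x y →
    ∃ z : Γ, |M.d x z - t| ≤ C ∧ |M.d z y - (M.d x y - t)| ≤ C

/-- `π` has almost invariant vectors (equivalently, `1 ≺ π`). -/
def HasAlmostInvariantVectors {H : Type*} [NormedAddCommGroup H]
    [InnerProductSpace ℝ H] (π : Γ →* (H ≃ₗᵢ[ℝ] H)) : Prop :=
  ∀ (S : Finset Γ) (ε : ℝ), 0 < ε → ∃ w : H, ‖w‖ = 1 ∧ ∀ g ∈ S, ‖π g w - w‖ < ε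

/-- The ball average `Avr_r(π) = (1/|B_r|) ∑_{g∈B_r} π(g)`. -/
noncomputable def ballAvg {H : Type*} [NormedAddCommGroup H] [InnerProductSpace ℝ H]
    (M : InvMetric Γ) (π : Γ →* (H ≃ₗᵢ[ℝ] H)) (r : ℝ) : H →L[ℝ] H :=
  (Nat.card {g : Γ | M.d g 1 ≤ r} : ℝ)⁻¹ •
    ∑ g ∈ (M.finiteBalls r).toFinset, ((π g).toContinuousLinearEquiv : H →L[ℝ] H)

namespace InvMetric

lemma dist_nonneg (M : InvMetric Γ) (x y : Γ) : 0 ≤ M.d x y := by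
  have := M.triangle x y x
  rw [M.refl, M.symm y x] at this
  linarith

lemma dist_inv_mul_one (M : InvMetric Γ) (g h : Γ) : M.d (h⁻¹ * g) 1 = M.d g h := by
  have := M.invariant h (h⁻¹ * g) 1
  rwa [mul_inv_cancel_left, mul_one, eq_comm] at this

lemma dist_inv_one (M : InvMetric Γ) (g : Γ) : M.d g⁻¹ 1 = M.d g 1 := by
  have := M.dist_inv_mul_one 1 g
  rwa [mul_one, M.symm 1 g] at this

lemma isBoundedUnder_log_card_ball (M : InvMetric Γ) (hne : 0 < growthExp M) :
    IsBoundedUnder (· ≤ ·) atTop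
      (fun r : ℝ => Real.log (Nat.card {g : Γ | M.d g 1 ≤ r}) / r) := by
  by_contra h
  exact hne.ne' (Real.limsup_of_not_isBoundedUnder h)

lemma one_le_card_ball (M : InvMetric Γ) {r : ℝ} (hr : 0 ≤ r) :
    1 ≤ Nat.card {g : Γ | M.d g 1 ≤ r} := by
  have := (M.finiteBalls r).to_subtype
  have : Nonempty {g : Γ | M.d g 1 ≤ r} := ⟨⟨1, by simpa [M.refl] using hr⟩⟩
  exact Nat.card_pos

lemma card_ball_eq (M : InvMetric Γ) (r : ℝ) :
    Nat.card {g : Γ | M.d g 1 ≤ r} = (M.finiteBalls r).toFinset.card := by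
  rw [Nat.card_coe_set_eq, Set.ncard_eq_toFinset_card _ (M.finiteBalls r)]

lemma eventually_card_ball_le (M : InvMetric Γ) (hne : 0 < growthExp M) {a : ℝ}
    (ha : growthExp M < a) :
    ∀ᶠ r : ℝ in atTop, (Nat.card {g : Γ | M.d g 1 ≤ r} : ℝ) ≤ Real.exp (a * r) := by
  filter_upwards [eventually_lt_of_limsup_lt ha (M.isBoundedUnder_log_card_ball hne),
    eventually_gt_atTop 0] with r hr hr0
  rw [div_lt_iff₀ hr0] at hr
  have h1 : (0 : ℝ) < Nat.card {g : Γ | M.d g 1 ≤ r} := by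
    exact_mod_cast M.one_le_card_ball hr0.le
  rw [← Real.log_le_iff_le_exp h1]
  exact hr.le

lemma exists_exp_lt_card_ball (M : InvMetric Γ) {a : ℝ} (ha : a < growthExp M) (R : ℝ) :
    ∃ r, R ≤ r ∧ Real.exp (a * r) < Nat.card {g : Γ | M.d g 1 ≤ r} := by
  have hcob : IsCoboundedUnder (· ≤ ·) atTop
      (fun r : ℝ => Real.log (Nat.card {g : Γ | M.d g 1 ≤ r}) / r) := by
    refine IsBoundedUnder.isCoboundedUnder_le ⟨0, ?_⟩
    rw [eventually_map]
    filter_upwards [eventually_gt_atTop 0] with r hr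
    exact div_nonneg (Real.log_natCast_nonneg _) hr.le
  obtain ⟨r, hr, hrR, hr0⟩ := ((frequently_lt_of_lt_limsup hcob ha).and_eventually
    ((eventually_ge_atTop R).and (eventually_gt_atTop 0))).exists
  refine ⟨r, hrR, ?_⟩
  rw [lt_div_iff₀ hr0] at hr
  have h1 : (0 : ℝ) < Nat.card {g : Γ | M.d g 1 ≤ r} := by
    exact_mod_cast M.one_le_card_ball hr0.le
  rwa [← Real.lt_log_iff_exp_lt h1]

/-- The Poincaré series of the group converges beyond the growth exponent. -/
lemma summable_exp_of_growthExp_lt (M : InvMetric Γ) (hne : 0 < growthExp M) {t : ℝ}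
    (ht : growthExp M < t) : Summable fun g : Γ => Real.exp (-t * M.d g 1) := by
  obtain ⟨a, ha, hat⟩ := exists_between ht
  have ht0 : 0 < t := hne.trans ht
  let b : ℕ → ℝ := fun n =>
    (Nat.card {g : Γ | M.d g 1 ≤ (n : ℝ) + 1} : ℝ) * Real.exp (-t * n)
  have hb0 : ∀ n, 0 ≤ b n := fun n => by positivity
  have hb : Summable b := by
    have hgeom : Summable fun n : ℕ => Real.exp a * Real.exp (n * (a - t)) :=
      (Real.summable_exp_nat_mul_iff.mpr (by linarith)).mul_left _
    refine hgeom.of_norm_bounded_eventually_nat ?_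
    have htend : Tendsto (fun n : ℕ => (n : ℝ) + 1) atTop atTop :=
      tendsto_atTop_add_const_right _ _ tendsto_natCast_atTop_atTop
    filter_upwards [htend.eventually (M.eventually_card_ball_le hne ha)] with n hn
    rw [Real.norm_of_nonneg (hb0 n)]
    calc b n ≤ Real.exp (a * (n + 1)) * Real.exp (-t * n) := by
          simp only [b]; gcongr
      _ = Real.exp a * Real.exp (n * (a - t)) := by
          rw [← Real.exp_add, ← Real.exp_add]; ring_nf
  refine summable_of_sum_le (c := ∑' n, b n) (fun g => (Real.exp_pos _).le) fun A => ?_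
  classical
  rw [← Finset.sum_fiberwise_of_maps_to (s := A) (t := A.image fun g => ⌊M.d g 1⌋₊)
    (g := fun g => ⌊M.d g 1⌋₊) (fun g hg => Finset.mem_image_of_mem _ hg)]
  refine le_trans (Finset.sum_le_sum fun n _ => ?_) (hb.sum_le_tsum _ fun n _ => hb0 n)
  calc ∑ g ∈ A with ⌊M.d g 1⌋₊ = n, Real.exp (-t * M.d g 1)
      ≤ ∑ g ∈ (M.finiteBalls ((n : ℝ) + 1)).toFinset, Real.exp (-t * n) := by
        refine le_trans (Finset.sum_le_sum (g := fun _ => Real.exp (-t * n)) fun g hg => ?_)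
          (Finset.sum_le_sum_of_subset_of_nonneg ?_ fun _ _ _ => (Real.exp_pos _).le)
        · have := Nat.floor_le (M.dist_nonneg g 1)
          rw [(Finset.mem_filter.mp hg).2] at this
          refine Real.exp_le_exp.mpr ?_
          nlinarith
        · intro g hg
          have := Nat.lt_floor_add_one (M.d g 1)
          rw [(Finset.mem_filter.mp hg).2] at this
          simpa using this.le
    _ = b n := by simp [b, M.card_ball_eq]

lemma gromov_nonneg (M : InvMetric Γ) (x y o : Γ) : 0 ≤ gromov M x y o := by
  have := M.triangle x o y
  rw [M.symm o y] at this
  unfold gromov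
  linarith

lemma gromov_le_left (M : InvMetric Γ) (x y o : Γ) : gromov M x y o ≤ M.d x o := by
  have := M.triangle y x o
  rw [M.symm y x] at this
  unfold gromov
  linarith

lemma gromov_comm (M : InvMetric Γ) (x y o : Γ) : gromov M x y o = gromov M y x o := by
  unfold gromov
  rw [M.symm x y]; ring

lemma gromov_le_right (M : InvMetric Γ) (x y o : Γ) : gromov M x y o ≤ M.d y o := by
  rw [gromov_comm]; exact M.gromov_le_left y x o

end InvMetric

lemma IsStronglyHyperbolic.isHyperbolic {M : InvMetric Γ} (h : IsStronglyHyperbolic M) :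
    IsHyperbolic M := by
  obtain ⟨ε, hε, h⟩ := h
  refine ⟨Real.log 2 / ε, fun x y z o => ?_⟩
  set m := min (gromov M x z o) (gromov M z y o)
  have h1 : Real.exp (-ε * gromov M x y o) ≤ Real.exp (Real.log 2 - ε * m) := by
    refine (h x y z o).trans ?_
    rw [sub_eq_add_neg, Real.exp_add, Real.exp_log two_pos, two_mul]
    have hl : m ≤ gromov M x z o := min_le_left _ _
    have hr : m ≤ gromov M z y o := min_le_right _ _
    gcongr <;> nlinarith
  rw [Real.exp_le_exp] at h1
  rw [sub_le_iff_le_add, ← sub_le_iff_le_add', le_div_iff₀ hε]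
  nlinarith

/-- The kernel `e^{-t (d(g, γ) - d(g, 1))}`, a discrete Poisson kernel. -/
noncomputable def horoKernel (M : InvMetric Γ) (t : ℝ) (γ g : Γ) : ℝ :=
  Real.exp (-t * (M.d g γ - M.d g 1))

lemma horoKernel_eq (M : InvMetric Γ) (t : ℝ) (γ g : Γ) :
    horoKernel M t γ g = Real.exp (2 * t * gromov M γ g 1 - t * M.d γ 1) := by
  unfold horoKernel gromov
  rw [M.symm γ g]
  congr 1; ring

/-- A point `z` on a rough geodesic from `1` to `g`, at distance about `i ≤ (γ, g)₁` from `1`,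
is at distance at most about `d(γ, 1) - i` from `γ`. -/
lemma exists_near_point {M : InvMetric Γ} (hhyp : IsHyperbolic M) (hrg : IsRoughlyGeodesic M) :
    ∃ C : ℝ, ∀ (g : Γ) (i : ℕ), ∃ z : Γ, ∀ γ : Γ, i ≤ gromov M γ g 1 →
      M.d γ z ≤ M.d γ 1 - i + C := by
  obtain ⟨C, hC0, hC⟩ := hrg
  obtain ⟨D, hD⟩ := hhyp
  refine ⟨3 * C + 2 * D, fun g i => ?_⟩
  by_cases hi : (i : ℝ) ≤ M.d g 1
  · obtain ⟨z, hz1, hz2⟩ := hC 1 g i (Nat.cast_nonneg i) (by rwa [M.symm])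
    refine ⟨z, fun γ hγ => ?_⟩
    have h := hD γ z g 1
    rw [abs_le] at hz1 hz2
    rw [M.symm 1 z] at hz1
    rw [M.symm 1 g] at hz2
    have hzg : i - C ≤ gromov M g z 1 := by
      unfold gromov
      rw [M.symm g z]
      linarith
    have hmin : i - C ≤ min (gromov M γ g 1) (gromov M g z 1) := le_min (by linarith) hzg
    have h3 : i - C - D ≤ gromov M γ z 1 := by linarith
    unfold gromov at h3
    linarith
  · exact ⟨1, fun γ hγ => absurd (hγ.trans (M.gromov_le_right γ g 1)) hi⟩

lemma sum_horoKernel_le {M : InvMetric Γ} (hhyp : IsHyperbolic M) (hrg : IsRoughlyGeodesic M)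
    {t s : ℝ} (hts : t ≤ s) (hst : s < 2 * t)
    (hs : Summable fun g : Γ => Real.exp (-s * M.d g 1)) :
    ∃ K : ℝ, 0 < K ∧ ∀ (r I : ℝ) (g : Γ) (A : Finset Γ), 0 ≤ I →
      (∀ γ ∈ A, M.d γ 1 ≤ r) → (∀ γ ∈ A, gromov M γ g 1 ≤ I) →
      ∑ γ ∈ A, horoKernel M t γ g ≤ K * Real.exp ((s - t) * r + (2 * t - s) * I) := by
  classical
  obtain ⟨C, hC⟩ := exists_near_point hhyp hrg
  have ht : 0 < t := by linarith
  have hs0 : 0 < s := by linarith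
  set Z := ∑' g : Γ, Real.exp (-s * M.d g 1) with hZ
  have hZpos : 0 < Z := hs.tsum_pos (fun g => (Real.exp_pos _).le) 1 (Real.exp_pos _)
  set θ := 2 * t - s with hθ
  have hθ0 : 0 < θ := by linarith
  have hq : 1 < Real.exp θ := Real.one_lt_exp_iff.mpr hθ0
  set K := Real.exp (2 * t + s * C) * Z * (Real.exp θ / (Real.exp θ - 1)) with hK
  have hq' : 0 < Real.exp θ - 1 := by linarith
  refine ⟨K, by positivity, fun r I g A hI hA hAI => ?_⟩
  choose z hz using hC g
  have hpt : ∀ γ ∈ A, horoKernel M t γ g ≤ Real.exp (2 * t + s * C) *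
      (Real.exp ((s - t) * r + θ * ⌊gromov M γ g 1⌋₊) *
        Real.exp (-s * M.d γ (z ⌊gromov M γ g 1⌋₊))) := by
    intro γ hγ
    set i := ⌊gromov M γ g 1⌋₊
    have h1 := hz i γ (Nat.floor_le (M.gromov_nonneg γ g 1))
    have h2 : gromov M γ g 1 < i + 1 := Nat.lt_floor_add_one _
    rw [horoKernel_eq, ← Real.exp_add, ← Real.exp_add, Real.exp_le_exp]
    have h3 := hA γ hγ
    have e1 := mul_le_mul_of_nonneg_left h1 hs0.le
    have e2 := mul_le_mul_of_nonneg_left h2.le ht.le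
    have e3 := mul_le_mul_of_nonneg_left h3 (sub_nonneg.mpr hts)
    rw [hθ]
    linarith
  calc ∑ γ ∈ A, horoKernel M t γ g
      ≤ ∑ γ ∈ A, Real.exp (2 * t + s * C) *
        (Real.exp ((s - t) * r + θ * ⌊gromov M γ g 1⌋₊) *
        Real.exp (-s * M.d γ (z ⌊gromov M γ g 1⌋₊))) := Finset.sum_le_sum hpt
    _ ≤ ∑ γ ∈ A, ∑ i ∈ Finset.range (⌊I⌋₊ + 1), Real.exp (2 * t + s * C) *
        (Real.exp ((s - t) * r + θ * i) * Real.exp (-s * M.d γ (z i))) := by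
        refine Finset.sum_le_sum fun γ hγ => ?_
        refine Finset.single_le_sum (f := fun i : ℕ => Real.exp (2 * t + s * C) *
          (Real.exp ((s - t) * r + θ * i) * Real.exp (-s * M.d γ (z i))))
          (fun i _ => by positivity) ?_
        rw [Finset.mem_range, Nat.lt_succ_iff]
        exact Nat.floor_le_floor (hAI γ hγ)
    _ = ∑ i ∈ Finset.range (⌊I⌋₊ + 1), Real.exp (2 * t + s * C) *
        (Real.exp ((s - t) * r + θ * i) * ∑ γ ∈ A, Real.exp (-s * M.d γ (z i))) := by
        rw [Finset.sum_comm]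
        simp only [Finset.mul_sum]
    _ ≤ ∑ i ∈ Finset.range (⌊I⌋₊ + 1), Real.exp (2 * t + s * C) *
        (Real.exp ((s - t) * r + θ * i) * Z) := by
        gcongr with i
        have hs' : Summable fun γ : Γ => Real.exp (-s * M.d γ (z i)) := by
          simpa only [Function.comp_def, Equiv.coe_mulLeft, M.dist_inv_mul_one] using
            (Equiv.mulLeft (z i)⁻¹).summable_iff.mpr hs
        refine (hs'.sum_le_tsum A fun _ _ => (Real.exp_pos _).le).trans_eq ?_
        rw [hZ, ← (Equiv.mulLeft (z i)⁻¹).tsum_eq fun g => Real.exp (-s * M.d g 1)]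
        simp only [Equiv.coe_mulLeft, M.dist_inv_mul_one]
    _ = Real.exp (2 * t + s * C) * Z * Real.exp ((s - t) * r) *
        ∑ i ∈ Finset.range (⌊I⌋₊ + 1), Real.exp θ ^ i := by
        rw [Finset.mul_sum]
        refine Finset.sum_congr rfl fun i _ => ?_
        rw [Real.exp_add ((s - t) * r), ← Real.exp_nat_mul, mul_comm θ]
        ring
    _ ≤ Real.exp (2 * t + s * C) * Z * Real.exp ((s - t) * r) *
        (Real.exp θ / (Real.exp θ - 1) * Real.exp (θ * I)) := by
        gcongr
        rw [geom_sum_eq hq.ne', div_mul_eq_mul_div]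
        gcongr
        rw [← Real.exp_nat_mul, ← Real.exp_add]
        have : Real.exp (((⌊I⌋₊ + 1 : ℕ) : ℝ) * θ) ≤ Real.exp (θ + θ * I) := by
          rw [Real.exp_le_exp]
          push_cast
          nlinarith [Nat.floor_le hI]
        linarith
    _ = K * Real.exp ((s - t) * r + θ * I) := by
        rw [hK, Real.exp_add ((s - t) * r)]; ring

lemma horoKernel_pos (M : InvMetric Γ) (t : ℝ) (γ g : Γ) : 0 < horoKernel M t γ g :=
  Real.exp_pos _

lemma horoKernel_le (M : InvMetric Γ) {t : ℝ} (ht : 0 ≤ t) (γ g : Γ) :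
    horoKernel M t γ g ≤ Real.exp (t * M.d γ 1) := by
  rw [horoKernel_eq, Real.exp_le_exp]
  nlinarith [M.gromov_le_left γ g 1]

/-- The functions on `Γ` that are uniformly continuous at infinity for the Gromov product. -/
def contAtInfinity (M : InvMetric Γ) : Submodule ℝ (Γ → ℝ) where
  carrier := {f | ∀ η > 0, ∃ N, ∀ g g', N ≤ gromov M g g' 1 → |f g - f g'| ≤ η}
  zero_mem' η hη := ⟨0, fun g g' _ => by simpa using hη.le⟩
  add_mem' {f₁ f₂} h₁ h₂ η hη := by
    obtain ⟨N₁, hN₁⟩ := h₁ (η / 2) (half_pos hη)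
    obtain ⟨N₂, hN₂⟩ := h₂ (η / 2) (half_pos hη)
    refine ⟨max N₁ N₂, fun g g' h => ?_⟩
    have e₁ := hN₁ g g' ((le_max_left _ _).trans h)
    have e₂ := hN₂ g g' ((le_max_right _ _).trans h)
    calc |(f₁ + f₂) g - (f₁ + f₂) g'| = |(f₁ g - f₁ g') + (f₂ g - f₂ g')| := by
          simp only [Pi.add_apply]; congr 1; ring
      _ ≤ |f₁ g - f₁ g'| + |f₂ g - f₂ g'| := abs_add_le _ _
      _ ≤ η := by linarith
  smul_mem' c f h η hη := by
    obtain ⟨N, hN⟩ := h (η / (|c| + 1)) (by positivity)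
    refine ⟨N, fun g g' hg => ?_⟩
    have e := hN g g' hg
    rw [le_div_iff₀ (by positivity)] at e
    calc |(c • f) g - (c • f) g'| = |f g - f g'| * |c| := by
          simp only [Pi.smul_apply, smul_eq_mul]; rw [← abs_mul]; congr 1; ring
      _ ≤ η := by nlinarith [abs_nonneg (f g - f g')]

lemma one_mem_contAtInfinity (M : InvMetric Γ) : (1 : Γ → ℝ) ∈ contAtInfinity M :=
  fun η hη => ⟨0, fun g g' _ => by simpa using hη.le⟩

lemma horoKernel_mem_contAtInfinity {M : InvMetric Γ} (hhyp : IsStronglyHyperbolic M) {t : ℝ}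
    (ht : 0 < t) (γ : Γ) : horoKernel M t γ ∈ contAtInfinity M := by
  obtain ⟨ε, hε, h⟩ := hhyp
  intro η hη
  set A := Real.exp (t * M.d γ 1) * (2 * t / ε * Real.exp (ε * M.d γ 1)) with hA
  have hA0 : 0 < A := by positivity
  set N := -Real.log (η / A) / ε with hN
  have key : ∀ g g', N ≤ gromov M g g' 1 → horoKernel M t γ g - horoKernel M t γ g' ≤ η := by
    intro g g' hg
    set Δ := gromov M γ g 1 - gromov M γ g' 1 with hΔ
    have h1 : ε * Δ ≤ Real.exp (ε * M.d γ 1) * Real.exp (-ε * N) := by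
      have h2 := mul_le_mul_of_nonneg_right (h γ g' g 1) (Real.exp_pos (ε * gromov M γ g 1)).le
      rw [add_mul, ← Real.exp_add, ← Real.exp_add, ← Real.exp_add,
        show -ε * gromov M γ g 1 + ε * gromov M γ g 1 = 0 by ring, Real.exp_zero] at h2
      have h3 : Real.exp (-ε * gromov M g g' 1 + ε * gromov M γ g 1) ≤
          Real.exp (ε * M.d γ 1 + -ε * N) := by
        rw [Real.exp_le_exp]
        nlinarith [M.gromov_le_left γ g 1]
      rw [Real.exp_add (ε * M.d γ 1)] at h3
      have h4 := Real.add_one_le_exp (-ε * gromov M γ g' 1 + ε * gromov M γ g 1)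
      rw [hΔ]
      linarith
    have hAN : A * Real.exp (-ε * N) = η := by
      have : -ε * N = Real.log (η / A) := by rw [hN]; field_simp
      rw [this, Real.exp_log (by positivity)]
      field_simp
    have h5 : horoKernel M t γ g' = horoKernel M t γ g * Real.exp (-(2 * t * Δ)) := by
      rw [horoKernel_eq, horoKernel_eq, ← Real.exp_add, hΔ]; congr 1; ring
    have h6 := Real.add_one_le_exp (-(2 * t * Δ))
    have h7 : 2 * t * Δ ≤ 2 * t / ε * (Real.exp (ε * M.d γ 1) * Real.exp (-ε * N)) := by
      calc 2 * t * Δ = 2 * t / ε * (ε * Δ) := by field_simp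
        _ ≤ _ := by gcongr
    calc horoKernel M t γ g - horoKernel M t γ g'
        = horoKernel M t γ g * (1 - Real.exp (-(2 * t * Δ))) := by rw [h5]; ring
      _ ≤ horoKernel M t γ g * (2 * t / ε * (Real.exp (ε * M.d γ 1) * Real.exp (-ε * N))) := by
          have := horoKernel_pos M t γ g
          gcongr
          linarith
      _ ≤ Real.exp (t * M.d γ 1) *
          (2 * t / ε * (Real.exp (ε * M.d γ 1) * Real.exp (-ε * N))) := by
          gcongr
          exact horoKernel_le M ht.le γ g
      _ = A * Real.exp (-ε * N) := by rw [hA]; ring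
      _ = η := hAN
  refine ⟨N, fun g g' hg => ?_⟩
  rw [abs_le]
  have e1 := key g g' hg
  have e2 := key g' g (by rwa [M.gromov_comm])
  constructor <;> linarith

/-- The function `∑_γ μ(γ) e^{-t (d(g, γ) - d(g, 1))}` of `g`. -/
noncomputable def horoSum (M : InvMetric Γ) (t : ℝ) : (Γ →₀ ℝ) →ₗ[ℝ] (Γ → ℝ) :=
  Finsupp.linearCombination ℝ (horoKernel M t)

lemma horoSum_apply (M : InvMetric Γ) (t : ℝ) (μ : Γ →₀ ℝ) (g : Γ) :
    horoSum M t μ g = ∑ γ ∈ μ.support, μ γ * horoKernel M t γ g := by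
  simp [horoSum, Finsupp.linearCombination_apply, Finsupp.sum, Finset.sum_apply]

lemma horoSum_sum_single (M : InvMetric Γ) (t : ℝ) (A : Finset Γ) (c : Γ → ℝ) (g : Γ) :
    horoSum M t (∑ γ ∈ A, Finsupp.single γ (c γ)) g = ∑ γ ∈ A, c γ * horoKernel M t γ g := by
  simp [horoSum, map_sum, Finset.sum_apply]

lemma horoSum_mem_contAtInfinity {M : InvMetric Γ} (hhyp : IsStronglyHyperbolic M) {t : ℝ}
    (ht : 0 < t) (μ : Γ →₀ ℝ) : horoSum M t μ ∈ contAtInfinity M := by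
  rw [horoSum, Finsupp.linearCombination_apply]
  exact Submodule.sum_mem _ fun γ _ =>
    Submodule.smul_mem _ _ (horoKernel_mem_contAtInfinity hhyp ht γ)

/-- A positive function that is continuous at infinity dominates, and is comparable at infinity
to, a finite positive combination of kernels, with uniform constants. -/
lemma exists_horoSum_comparable {M : InvMetric Γ} (hhyp : IsStronglyHyperbolic M)
    (hrg : IsRoughlyGeodesic M) {t : ℝ} (ht : 0 < t)
    (hs : Summable fun g : Γ => Real.exp (-(3 / 2 * t) * M.d g 1)) :
    ∃ c : ℝ, 0 < c ∧ ∀ f ∈ contAtInfinity M, ∀ a > 0, (∀ g, a ≤ f g) → (∀ g, f g ≤ 1) →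
      ∃ (ν : Γ →₀ ℝ) (n : ℝ), 0 ≤ ν ∧ (∀ g, horoSum M t ν g ≤ f g / 2) ∧
        ∀ g, n ≤ M.d g 1 → c * f g ≤ horoSum M t ν g := by
  classical
  obtain ⟨K, hK, hsum⟩ := sum_horoKernel_le (t := t) (s := 3 / 2 * t) hhyp.isHyperbolic hrg
    (by linarith) (by linarith) hs
  obtain ⟨C, hC0, hC⟩ := hrg
  set κ := (6 * K * Real.exp (t * C))⁻¹ with hκ
  have hκ0 : 0 < κ := by positivity
  refine ⟨κ * Real.exp (-t * C) / 2, by positivity, fun f hf a ha haf hf1 => ?_⟩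
  obtain ⟨N₀, hN₀⟩ := hf (a / 2) (by positivity)
  set N := max N₀ 0
  have hN0 : 0 ≤ N := le_max_right _ _
  have hN : ∀ g g', N ≤ gromov M g g' 1 → f g ≤ 2 * f g' := by
    intro g g' h
    have := hN₀ g g' ((le_max_left _ _).trans h)
    rw [abs_le] at this
    linarith [haf g']
  set n := N + C + |2 * Real.log a / t| with hn
  have hnN : N + C ≤ n := by rw [hn]; linarith [abs_nonneg (2 * Real.log a / t)]
  set A := (M.finiteBalls (n + C)).toFinset
  have hA : ∀ γ, γ ∈ A ↔ M.d γ 1 ≤ n + C := fun γ => by simp [A]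
  have hfpos : ∀ g, 0 < f g := fun g => ha.trans_le (haf g)
  have hna : Real.exp (t / 2 * (N - n - C)) ≤ a := by
    rw [← Real.le_log_iff_exp_le ha]
    have h1 : t / 2 * |2 * Real.log a / t| = |Real.log a| := by
      rw [abs_div, abs_mul, abs_of_pos ht, abs_two]; field_simp
    have h2 := neg_abs_le (Real.log a)
    have : t / 2 * (N - n - C) = - (t / 2 * (2 * C)) - t / 2 * |2 * Real.log a / t| := by
      rw [hn]; ring
    rw [this, h1]
    nlinarith
  refine ⟨∑ γ ∈ A, Finsupp.single γ (κ * Real.exp (-t * n) * f γ), n,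
    Finset.sum_nonneg fun γ _ => Finsupp.single_nonneg.mpr
      (by have := hfpos γ; positivity), fun g => ?_, fun g hg => ?_⟩
  · rw [horoSum_sum_single]
    have hfar : ∑ γ ∈ A with N ≤ gromov M γ g 1, f γ * horoKernel M t γ g ≤
        2 * f g * (K * Real.exp (t * (n + C))) := by
      calc ∑ γ ∈ A with N ≤ gromov M γ g 1, f γ * horoKernel M t γ g
          ≤ ∑ γ ∈ A with N ≤ gromov M γ g 1, 2 * f g * horoKernel M t γ g := by
            refine Finset.sum_le_sum fun γ hγ => ?_
            have := horoKernel_pos M t γ g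
            gcongr
            exact hN γ g (Finset.mem_filter.mp hγ).2
        _ = 2 * f g * ∑ γ ∈ A with N ≤ gromov M γ g 1, horoKernel M t γ g := by
            rw [Finset.mul_sum]
        _ ≤ 2 * f g * (K * Real.exp (t * (n + C))) := by
            have hA' : ∀ γ ∈ A.filter (N ≤ gromov M · g 1), M.d γ 1 ≤ n + C :=
              fun γ hγ => (hA γ).mp (Finset.mem_filter.mp hγ).1
            have := hsum (n + C) (n + C) g _ (by linarith) hA'
              fun γ hγ => (M.gromov_le_left γ g 1).trans (hA' γ hγ)
            have e : (3 / 2 * t - t) * (n + C) + (2 * t - 3 / 2 * t) * (n + C) = t * (n + C) := by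
              ring
            rw [e] at this
            have := hfpos g
            gcongr
    have hnear : ∑ γ ∈ A with ¬ N ≤ gromov M γ g 1, f γ * horoKernel M t γ g ≤
        f g * (K * Real.exp (t * (n + C))) := by
      calc ∑ γ ∈ A with ¬ N ≤ gromov M γ g 1, f γ * horoKernel M t γ g
          ≤ ∑ γ ∈ A with ¬ N ≤ gromov M γ g 1, horoKernel M t γ g := by
            refine Finset.sum_le_sum fun γ hγ => ?_
            exact mul_le_of_le_one_left (horoKernel_pos M t γ g).le (hf1 γ)
        _ ≤ K * Real.exp ((3 / 2 * t - t) * (n + C) + (2 * t - 3 / 2 * t) * N) :=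
            hsum (n + C) N g _ hN0
              (fun γ hγ => (hA γ).mp (Finset.mem_filter.mp hγ).1)
              (fun γ hγ => (not_le.mp (Finset.mem_filter.mp hγ).2).le)
        _ = Real.exp (t / 2 * (N - n - C)) * (K * Real.exp (t * (n + C))) := by
            rw [mul_left_comm, ← Real.exp_add]; congr 2; ring
        _ ≤ f g * (K * Real.exp (t * (n + C))) := by
            gcongr
            exact hna.trans (haf g)
    calc ∑ γ ∈ A, κ * Real.exp (-t * n) * f γ * horoKernel M t γ g
        = κ * Real.exp (-t * n) * (∑ γ ∈ A with N ≤ gromov M γ g 1, f γ * horoKernel M t γ g +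
          ∑ γ ∈ A with ¬ N ≤ gromov M γ g 1, f γ * horoKernel M t γ g) := by
          rw [Finset.sum_filter_add_sum_filter_not, Finset.mul_sum]
          exact Finset.sum_congr rfl fun γ _ => by ring
      _ ≤ κ * Real.exp (-t * n) * (2 * f g * (K * Real.exp (t * (n + C))) +
          f g * (K * Real.exp (t * (n + C)))) := by gcongr
      _ = f g / 2 := by
          rw [hκ, mul_add t, Real.exp_add, neg_mul, Real.exp_neg]
          field_simp
          ring
  · rw [horoSum_sum_single]
    obtain ⟨z, hz1, hz2⟩ := hC 1 g n (by linarith) (by rwa [M.symm])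
    rw [abs_le] at hz1 hz2
    rw [M.symm 1 z] at hz1
    rw [M.symm 1 g, M.symm z g] at hz2
    have hzA : z ∈ A := (hA z).mpr (by linarith)
    have hgz : N ≤ gromov M g z 1 := by
      unfold gromov
      linarith
    have hker : Real.exp (t * (n - C)) ≤ horoKernel M t z g := by
      unfold horoKernel
      rw [Real.exp_le_exp]
      nlinarith
    calc κ * Real.exp (-t * C) / 2 * f g
        = κ * Real.exp (-t * n) * (f g / 2) * Real.exp (t * (n - C)) := by
          have : Real.exp (-t * C) = Real.exp (-t * n) * Real.exp (t * (n - C)) := by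
            rw [← Real.exp_add]; congr 1; ring
          rw [this]; ring
      _ ≤ κ * Real.exp (-t * n) * f z * horoKernel M t z g := by
          have := hfpos z
          gcongr
          linarith [hN g z hgz]
      _ ≤ ∑ γ ∈ A, κ * Real.exp (-t * n) * f γ * horoKernel M t γ g := by
          refine Finset.single_le_sum (f := fun γ => κ * Real.exp (-t * n) * f γ *
            horoKernel M t γ g) (fun γ _ => ?_) hzA
          have := hfpos γ
          have := horoKernel_pos M t γ g
          positivity

lemma horoSum_nonneg (M : InvMetric Γ) (t : ℝ) {μ : Γ →₀ ℝ} (hμ : 0 ≤ μ) (g : Γ) :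
    0 ≤ horoSum M t μ g := by
  rw [horoSum_apply]
  exact Finset.sum_nonneg fun γ _ => mul_nonneg (hμ γ) (horoKernel_pos M t γ g).le

/-- Discretization of the constant function at infinity: it is approximated by finite positive
combinations of kernels whose weights on a given finite set are bounded below. -/
lemma exists_horoSum_close_one {M : InvMetric Γ} (hhyp : IsStronglyHyperbolic M)
    (hrg : IsRoughlyGeodesic M) {t : ℝ} (ht : 0 < t)
    (hs : Summable fun g : Γ => Real.exp (-(3 / 2 * t) * M.d g 1)) (S : Finset Γ) :
    ∃ c₀ : ℝ, 0 < c₀ ∧ ∀ η > 0, ∃ (μ : Γ →₀ ℝ) (n : ℝ), 0 ≤ μ ∧ (∀ s ∈ S, c₀ ≤ μ s) ∧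
      (∀ g, horoSum M t μ g ≤ 1) ∧ ∀ g, n ≤ M.d g 1 → 1 - η ≤ horoSum M t μ g := by
  classical
  obtain ⟨c, hc, hstep⟩ := exists_horoSum_comparable hhyp hrg ht hs
  set c₀ := (2 * (1 + ∑ s ∈ S, Real.exp (t * M.d s 1)))⁻¹ with hc₀
  have hS0 : 0 ≤ ∑ s ∈ S, Real.exp (t * M.d s 1) :=
    Finset.sum_nonneg fun _ _ => (Real.exp_pos _).le
  have hc₀0 : 0 < c₀ := by positivity
  set c' := min c (1 / 2)
  have hc'0 : 0 < c' := lt_min hc one_half_pos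
  have hc'1 : c' ≤ 1 / 2 := min_le_right _ _
  have hiter : ∀ k : ℕ, ∃ (μ : Γ →₀ ℝ) (n a : ℝ), 0 < a ∧ 0 ≤ μ ∧ (∀ s ∈ S, c₀ ≤ μ s) ∧
      (∀ g, a ≤ 1 - horoSum M t μ g) ∧
      ∀ g, n ≤ M.d g 1 → 1 - horoSum M t μ g ≤ (1 - c') ^ k := by
    intro k
    induction k with
    | zero =>
      have h0 : 0 ≤ ∑ γ ∈ S, Finsupp.single γ c₀ :=
        Finset.sum_nonneg fun γ _ => Finsupp.single_nonneg.mpr hc₀0.le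
      refine ⟨∑ γ ∈ S, Finsupp.single γ c₀, 0, 1 / 2, one_half_pos, h0, fun s hs => ?_,
        fun g => ?_, fun g _ => ?_⟩
      · rw [Finsupp.finsetSum_apply]
        refine le_trans (by simp) (Finset.single_le_sum
          (f := fun γ => (Finsupp.single γ c₀ : Γ →₀ ℝ) s) (fun γ _ => ?_) hs)
        exact Finsupp.single_nonneg.mpr hc₀0.le s
      · rw [horoSum_sum_single M t S (fun _ => c₀)]
        have h1 : ∑ γ ∈ S, c₀ * horoKernel M t γ g ≤
            c₀ * (1 + ∑ s ∈ S, Real.exp (t * M.d s 1)) := by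
          rw [← Finset.mul_sum]
          gcongr
          refine (Finset.sum_le_sum fun γ _ => horoKernel_le M ht.le γ g).trans ?_
          linarith
        have h2 : c₀ * (1 + ∑ s ∈ S, Real.exp (t * M.d s 1)) = 1 / 2 := by
          rw [hc₀]; field_simp
        linarith
      · have := horoSum_nonneg M t h0 g
        simpa using this
    | succ k ih =>
      obtain ⟨μ, n, a, ha, hμ, hμS, haμ, hμk⟩ := ih
      have hcont : 1 - horoSum M t μ ∈ contAtInfinity M :=
        Submodule.sub_mem _ (one_mem_contAtInfinity M) (horoSum_mem_contAtInfinity hhyp ht μ)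
      obtain ⟨ν, n', hν, hνle, hνge⟩ := hstep _ hcont a ha haμ fun g => by
        simpa using horoSum_nonneg M t hμ g
      simp only [Pi.sub_apply, Pi.one_apply] at hνle hνge
      refine ⟨μ + ν, max n n', a / 2, half_pos ha, add_nonneg hμ hν, fun s hs => ?_,
        fun g => ?_, fun g hg => ?_⟩
      · exact (hμS s hs).trans (le_add_of_nonneg_right (hν s))
      · rw [map_add, Pi.add_apply]
        linarith [hνle g, haμ g]
      · rw [map_add, Pi.add_apply, pow_succ]
        have h1 := hμk g ((le_max_left _ _).trans hg)
        have h2 := hνge g ((le_max_right _ _).trans hg)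
        have h3 : c' * (1 - horoSum M t μ g) ≤ c * (1 - horoSum M t μ g) :=
          mul_le_mul_of_nonneg_right (min_le_left _ _) (ha.le.trans (haμ g))
        have h4 := mul_le_mul_of_nonneg_right h1 (show 0 ≤ 1 - c' by linarith)
        linarith
  refine ⟨c₀, hc₀0, fun η hη => ?_⟩
  obtain ⟨k, hk⟩ := exists_pow_lt_of_lt_one hη (show 1 - c' < 1 by linarith)
  obtain ⟨μ, n, a, ha, hμ, hμS, haμ, hμk⟩ := hiter k
  exact ⟨μ, n, hμ, hμS, fun g => by linarith [haμ g], fun g hg => by linarith [hμk g hg]⟩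

section OrbitSum

variable {H : Type*} [NormedAddCommGroup H] [InnerProductSpace ℝ H]

lemma map_mul_orbit (π : Γ →* (H ≃ₗᵢ[ℝ] H)) (g h : Γ) (v : H) : π (g * h) v = π g (π h v) := by
  rw [map_mul]; rfl

lemma inner_orbit (π : Γ →* (H ≃ₗᵢ[ℝ] H)) (v : H) (g h : Γ) :
    ⟪π g v, π h v⟫ = ⟪π (h⁻¹ * g) v, v⟫ := by
  have : π g v = π h (π (h⁻¹ * g) v) := by
    rw [← map_mul_orbit, mul_inv_cancel_left]
  rw [this, LinearIsometryEquiv.inner_map_map]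

/-- The vector `∑_g a(g) π(g) v`. -/
noncomputable def orbitSum (π : Γ →* (H ≃ₗᵢ[ℝ] H)) (v : H) (a : Γ → ℝ) : H :=
  ∑' g, a g • π g v

lemma map_orbitSum (π : Γ →* (H ≃ₗᵢ[ℝ] H)) (v : H) (a : Γ → ℝ) (γ : Γ) :
    π γ (orbitSum π v a) = orbitSum π v fun g => a (γ⁻¹ * g) := by
  unfold orbitSum
  rw [← LinearIsometryEquiv.coe_toContinuousLinearEquiv, ContinuousLinearEquiv.map_tsum,
    ← (Equiv.mulLeft γ).tsum_eq fun g => a (γ⁻¹ * g) • π g v]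
  refine tsum_congr fun g => ?_
  rw [LinearIsometryEquiv.coe_toContinuousLinearEquiv, map_smul, Equiv.coe_mulLeft,
    inv_mul_cancel_left, map_mul_orbit]

variable [CompleteSpace H]

lemma summable_smul_orbit (π : Γ →* (H ≃ₗᵢ[ℝ] H)) (v : H) {a : Γ → ℝ} (ha : Summable a) :
    Summable fun g => a g • π g v := by
  refine Summable.of_norm ?_
  simp only [norm_smul, LinearIsometryEquiv.norm_map]
  exact ha.norm.mul_right _

lemma inner_orbitSum_left (π : Γ →* (H ≃ₗᵢ[ℝ] H)) (v : H) {a : Γ → ℝ} (ha : Summable a) (x : H) :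
    HasSum (fun g => a g * ⟪π g v, x⟫) ⟪orbitSum π v a, x⟫ := by
  have := (innerSL ℝ x).hasSum (summable_smul_orbit π v ha).hasSum
  simp only [innerSL_apply_apply, real_inner_smul_right] at this
  simpa only [orbitSum, real_inner_comm x] using this

lemma inner_orbitSum_nonneg (π : Γ →* (H ≃ₗᵢ[ℝ] H)) (v : H) (hpos : ∀ g, 0 ≤ ⟪π g v, v⟫)
    {a b : Γ → ℝ} (ha : Summable a) (hb : Summable b) (ha0 : ∀ g, 0 ≤ a g) (hb0 : ∀ g, 0 ≤ b g) :
    0 ≤ ⟪orbitSum π v a, orbitSum π v b⟫ := by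
  refine (inner_orbitSum_left π v ha _).nonneg fun g => mul_nonneg (ha0 g) ?_
  rw [real_inner_comm]
  refine (inner_orbitSum_left π v hb _).nonneg fun h => mul_nonneg (hb0 h) ?_
  rw [inner_orbit]
  exact hpos _

lemma orbitSum_add (π : Γ →* (H ≃ₗᵢ[ℝ] H)) (v : H) {a b : Γ → ℝ} (ha : Summable a)
    (hb : Summable b) : orbitSum π v (fun g => a g + b g) = orbitSum π v a + orbitSum π v b := by
  unfold orbitSum
  rw [← (summable_smul_orbit π v ha).tsum_add (summable_smul_orbit π v hb)]
  simp only [add_smul]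

lemma orbitSum_mul (π : Γ →* (H ≃ₗᵢ[ℝ] H)) (v : H) {a : Γ → ℝ} (ha : Summable a) (c : ℝ) :
    orbitSum π v (fun g => c * a g) = c • orbitSum π v a := by
  unfold orbitSum
  rw [← (summable_smul_orbit π v ha).tsum_const_smul]
  simp only [mul_smul]

lemma orbitSum_sum (π : Γ →* (H ≃ₗᵢ[ℝ] H)) (v : H) {ι : Type*} (A : Finset ι) {a : ι → Γ → ℝ}
    (ha : ∀ i ∈ A, Summable (a i)) :
    orbitSum π v (fun g => ∑ i ∈ A, a i g) = ∑ i ∈ A, orbitSum π v (a i) := by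
  unfold orbitSum
  rw [← Summable.tsum_finsetSum fun i hi => summable_smul_orbit π v (ha i hi)]
  simp only [Finset.sum_smul]

/-- If `μ * w ≥ (1 - η) w` outside the finite set `E`, then the vector `ξ = ∑_g w(g) π(g) v`
satisfies `⟪π(μ) ξ, ξ⟫ ≥ (1 - η) ‖ξ‖² - |E| ‖ξ‖`. -/
lemma le_sum_inner_orbitSum (π : Γ →* (H ≃ₗᵢ[ℝ] H)) (v : H) (hv : ‖v‖ = 1)
    (hpos : ∀ g, 0 ≤ ⟪π g v, v⟫) {w : Γ → ℝ} (hw : Summable w) (hw0 : ∀ g, 0 ≤ w g)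
    (hw1 : ∀ g, w g ≤ 1) {μ : Γ →₀ ℝ} (hμ : 0 ≤ μ) (E : Finset Γ) {η : ℝ}
    (hE : ∀ g ∉ E, (1 - η) * w g ≤ ∑ γ ∈ μ.support, μ γ * w (γ⁻¹ * g)) (hη : 0 ≤ η) :
    (1 - η) * ‖orbitSum π v w‖ ^ 2 - E.card * ‖orbitSum π v w‖ ≤
      ∑ γ ∈ μ.support, μ γ * ⟪π γ (orbitSum π v w), orbitSum π v w⟫ := by
  classical
  set ξ := orbitSum π v w with hξ
  have hwγ : ∀ γ : Γ, Summable fun g => w (γ⁻¹ * g) := fun γ =>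
    (Equiv.mulLeft γ⁻¹).summable_iff.mpr hw
  have hsum : Summable fun g => ∑ γ ∈ μ.support, μ γ * w (γ⁻¹ * g) :=
    summable_sum fun γ _ => (hwγ γ).mul_left _
  have hconv : orbitSum π v (fun g => ∑ γ ∈ μ.support, μ γ * w (γ⁻¹ * g)) =
      ∑ γ ∈ μ.support, μ γ • π γ ξ := by
    rw [orbitSum_sum π v _ fun γ _ => (hwγ γ).mul_left _]
    refine Finset.sum_congr rfl fun γ _ => ?_
    rw [orbitSum_mul π v (hwγ γ), map_orbitSum]
  set e : Γ → ℝ := fun g => if g ∈ E then w g else 0 with he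
  have hes : Summable e := summable_of_ne_finset_zero (s := E) fun g hg => if_neg hg
  have hEnorm : ‖orbitSum π v e‖ ≤ E.card := by
    have : orbitSum π v e = ∑ g ∈ E, w g • π g v := by
      unfold orbitSum
      rw [tsum_eq_sum (s := E) fun g hg => by simp [he, hg]]
      exact Finset.sum_congr rfl fun g hg => by simp [he, hg]
    rw [this]
    refine (norm_sum_le _ _).trans ?_
    refine (Finset.sum_le_card_nsmul _ _ 1 fun g _ => ?_).trans (by simp)
    rw [norm_smul, LinearIsometryEquiv.norm_map, hv, mul_one, Real.norm_of_nonneg (hw0 g)]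
    exact hw1 g
  have hnn := inner_orbitSum_nonneg π v hpos
    (a := fun g => (∑ γ ∈ μ.support, μ γ * w (γ⁻¹ * g) + (-(1 - η)) * w g) + e g)
    ((hsum.add (hw.mul_left _)).add hes) hw (fun g => by
      have h0 : 0 ≤ ∑ γ ∈ μ.support, μ γ * w (γ⁻¹ * g) :=
        Finset.sum_nonneg fun γ _ => mul_nonneg (hμ γ) (hw0 _)
      by_cases hg : g ∈ E
      · simp only [he, hg, if_true]
        nlinarith [mul_nonneg hη (hw0 g)]
      · simp only [he, hg, if_false]
        linarith [hE g hg]) hw0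
  rw [orbitSum_add π v (hsum.add (hw.mul_left _)) hes, orbitSum_add π v hsum (hw.mul_left _),
    hconv, orbitSum_mul π v hw, inner_add_left, inner_add_left, sum_inner, real_inner_smul_left,
    ← hξ, real_inner_self_eq_norm_sq] at hnn
  simp only [real_inner_smul_left] at hnn
  have hcs := (real_inner_le_norm (orbitSum π v e) ξ).trans
    (mul_le_mul_of_nonneg_right hEnorm (norm_nonneg ξ))
  linarith

end OrbitSum

lemma sum_le_of_convolution_le {w : Γ → ℝ} (hw : Summable w) (hw0 : ∀ g, 0 < w g)
    {μ : Γ →₀ ℝ} {c : ℝ} (h : ∀ g, ∑ γ ∈ μ.support, μ γ * w (γ⁻¹ * g) ≤ c * w g) :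
    ∑ γ ∈ μ.support, μ γ ≤ c := by
  have hwγ : ∀ γ : Γ, HasSum (fun g => w (γ⁻¹ * g)) (∑' g, w g) := fun γ =>
    (Equiv.mulLeft γ⁻¹).hasSum_iff.mpr hw.hasSum
  have h1 : HasSum (fun g => ∑ γ ∈ μ.support, μ γ * w (γ⁻¹ * g))
      (∑ γ ∈ μ.support, μ γ * ∑' g, w g) := hasSum_sum fun γ _ => (hwγ γ).mul_left _
  have h2 := hasSum_le h h1 (hw.hasSum.mul_left c)
  rw [← Finset.sum_mul] at h2
  exact le_of_mul_le_mul_right h2 (hw.tsum_pos (fun g => (hw0 g).le) 1 (hw0 1))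

/-- The weight `e^{-F(d(g, 1))}`, where `F` has slope `t - ε` on `[0, R]` and `t + ε` beyond. -/
noncomputable def cutoffWeight (M : InvMetric Γ) (t ε R : ℝ) (g : Γ) : ℝ :=
  Real.exp (-t * M.d g 1 + ε * (R - |M.d g 1 - R|))

lemma cutoffWeight_pos (M : InvMetric Γ) (t ε R : ℝ) (g : Γ) : 0 < cutoffWeight M t ε R g :=
  Real.exp_pos _

lemma cutoffWeight_of_le (M : InvMetric Γ) (t ε : ℝ) {R : ℝ} {g : Γ} (h : M.d g 1 ≤ R) :
    cutoffWeight M t ε R g = Real.exp (-(t - ε) * M.d g 1) := by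
  rw [cutoffWeight, abs_of_nonpos (by linarith)]
  congr 1; ring

lemma cutoffWeight_le_one (M : InvMetric Γ) {t ε : ℝ} (hε : 0 ≤ ε) (hεt : ε ≤ t) (R : ℝ) (g : Γ) :
    cutoffWeight M t ε R g ≤ 1 := by
  rw [cutoffWeight, Real.exp_le_one_iff]
  have := mul_le_mul_of_nonneg_left (neg_abs_le (M.d g 1 - R)) hε
  nlinarith [M.dist_nonneg g 1]

lemma summable_cutoffWeight {M : InvMetric Γ} (hne : 0 < growthExp M) {ε : ℝ} (hε : 0 < ε)
    (R : ℝ) : Summable (cutoffWeight M (growthExp M) ε R) := by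
  have hs := (M.summable_exp_of_growthExp_lt hne (lt_add_of_pos_right _ hε)).mul_left
    (Real.exp (2 * ε * R))
  refine hs.of_nonneg_of_le (fun g => (cutoffWeight_pos M _ _ _ g).le) fun g => ?_
  rw [cutoffWeight, ← Real.exp_add, Real.exp_le_exp]
  have := mul_le_mul_of_nonneg_left (le_abs_self (M.d g 1 - R)) hε.le
  nlinarith

lemma cutoffWeight_translate (M : InvMetric Γ) (t : ℝ) {ε : ℝ} (hε : 0 ≤ ε) (R : ℝ) {ρ : ℝ}
    {γ : Γ} (hγ : M.d γ 1 ≤ ρ) (g : Γ) :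
    Real.exp (-(ε * ρ)) * (horoKernel M t γ g * cutoffWeight M t ε R g) ≤
        cutoffWeight M t ε R (γ⁻¹ * g) ∧
      cutoffWeight M t ε R (γ⁻¹ * g) ≤
        Real.exp (ε * ρ) * (horoKernel M t γ g * cutoffWeight M t ε R g) := by
  have h1 : M.d g 1 ≤ M.d g γ + M.d γ 1 := M.triangle _ _ _
  have h2 : M.d g γ ≤ M.d g 1 + M.d γ 1 := by
    have := M.triangle g 1 γ
    rwa [M.symm 1 γ] at this
  have h3 : |(|M.d g 1 - R| - |M.d g γ - R|)| ≤ ρ := by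
    refine (abs_abs_sub_abs_le_abs_sub _ _).trans ?_
    rw [abs_le]
    constructor <;> linarith
  rw [abs_le] at h3
  have h4 := mul_le_mul_of_nonneg_left h3.1 hε
  have h5 := mul_le_mul_of_nonneg_left h3.2 hε
  unfold cutoffWeight horoKernel
  rw [M.dist_inv_mul_one, ← Real.exp_add, ← Real.exp_add, ← Real.exp_add, Real.exp_le_exp,
    Real.exp_le_exp]
  constructor <;> linarith

lemma exists_lt_sum_of_lt_critExp {M : InvMetric Γ} {φ : Γ → ℝ} (hpos : ∀ g, 0 ≤ φ g) {t : ℝ}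
    (ht0 : 0 ≤ t) (ht : t < critExp M φ) (L : ℝ) :
    ∃ A : Finset Γ, L < ∑ g ∈ A, Real.exp (-t * M.d g 1) * φ g := by
  by_contra! h
  have hs := summable_of_sum_le (fun g => mul_nonneg (Real.exp_pos (-t * M.d g 1)).le (hpos g)) h
  exact ht.not_ge (csInf_le ⟨0, fun _ hx => hx.1⟩ ⟨ht0, hs⟩)

/-- If the critical exponent of a nonnegative coefficient is the growth exponent, then the
representation has almost invariant vectors. -/
theorem hasAlmostInvariantVectors_of_growthExp_le_critExp {M : InvMetric Γ}
    (hhyp : IsStronglyHyperbolic M) (hrg : IsRoughlyGeodesic M) (hne : 0 < growthExp M)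
    {H : Type*} [NormedAddCommGroup H] [InnerProductSpace ℝ H] [CompleteSpace H]
    (π : Γ →* (H ≃ₗᵢ[ℝ] H)) (v : H) (hv : ‖v‖ = 1)
    (φ : Γ → ℝ) (hφ : ∀ g, φ g = ⟪π g v, v⟫) (hpos : ∀ g, 0 ≤ φ g)
    (hcrit : growthExp M ≤ critExp M φ) : HasAlmostInvariantVectors π := by
  classical
  intro S ε hε
  set δ := growthExp M with hδ
  obtain ⟨c₀, hc₀, hdisc⟩ := exists_horoSum_close_one hhyp hrg hne
    (M.summable_exp_of_growthExp_lt hne (by linarith)) S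
  set η := min 1 (c₀ * ε ^ 2 / 16) with hη
  have hη0 : 0 < η := by positivity
  have hη1 : η ≤ 1 := min_le_left _ _
  have hηc : η ≤ c₀ * ε ^ 2 / 16 := min_le_right _ _
  obtain ⟨μ, n, hμ, hμS, hμ1, hμn⟩ := hdisc (η / 2) (by positivity)
  obtain ⟨ρ, hρ⟩ : ∃ ρ : ℝ, ∀ γ ∈ μ.support, M.d γ 1 ≤ ρ :=
    ⟨∑ γ ∈ μ.support, M.d γ 1, fun γ hγ =>
      Finset.single_le_sum (f := fun γ => M.d γ 1) (fun γ _ => M.dist_nonneg γ 1) hγ⟩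
  obtain ⟨α, hα0, hαδ, hαup, hαlow⟩ : ∃ α : ℝ, 0 < α ∧ α ≤ δ ∧ Real.exp (α * ρ) ≤ 1 + η ∧
      1 - η / 2 ≤ Real.exp (-(α * ρ)) := by
    have c0 : ∀ᶠ α in nhdsWithin 0 (Set.Ioi 0), α ∈ Set.Ioc 0 δ := Ioc_mem_nhdsGT hne
    have c1 : Tendsto (fun α : ℝ => Real.exp (α * ρ)) (nhdsWithin 0 (Set.Ioi 0)) (nhds 1) := by
      have : Continuous fun α : ℝ => Real.exp (α * ρ) := by fun_prop
      simpa using (this.tendsto 0).mono_left nhdsWithin_le_nhds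
    have c2 : Tendsto (fun α : ℝ => Real.exp (-(α * ρ))) (nhdsWithin 0 (Set.Ioi 0)) (nhds 1) := by
      have : Continuous fun α : ℝ => Real.exp (-(α * ρ)) := by fun_prop
      simpa using (this.tendsto 0).mono_left nhdsWithin_le_nhds
    obtain ⟨α, h2, h3, h4⟩ :=
      (c0.and ((c1.eventually (gt_mem_nhds (show 1 < 1 + η by linarith))).and
      (c2.eventually (lt_mem_nhds (show 1 - η / 2 < 1 by linarith))))).exists
    exact ⟨α, h2.1, h2.2, h3.le, h4.le⟩
  set E := (M.finiteBalls n).toFinset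
  obtain ⟨A, hA⟩ := exists_lt_sum_of_lt_critExp (M := M) hpos (t := δ - α) (by linarith)
    (by linarith) (max 0 (E.card / η))
  set R := ∑ g ∈ A, M.d g 1
  have hR : ∀ g ∈ A, M.d g 1 ≤ R := fun g hg =>
    Finset.single_le_sum (f := fun g => M.d g 1) (fun g _ => M.dist_nonneg g 1) hg
  set w := cutoffWeight M δ α R with hwdef
  have hw : Summable w := summable_cutoffWeight hne hα0 R
  have hw0 : ∀ g, 0 < w g := cutoffWeight_pos M δ α R
  have hw1 : ∀ g, w g ≤ 1 := cutoffWeight_le_one M hα0.le hαδ R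
  have hupper : ∀ g, ∑ γ ∈ μ.support, μ γ * w (γ⁻¹ * g) ≤ (1 + η) * w g := by
    intro g
    calc ∑ γ ∈ μ.support, μ γ * w (γ⁻¹ * g)
        ≤ ∑ γ ∈ μ.support, μ γ * (Real.exp (α * ρ) * (horoKernel M δ γ g * w g)) :=
          Finset.sum_le_sum fun γ hγ => mul_le_mul_of_nonneg_left
            (cutoffWeight_translate M δ hα0.le R (hρ γ hγ) g).2 (hμ γ)
      _ = Real.exp (α * ρ) * (horoSum M δ μ g * w g) := by
          rw [horoSum_apply, Finset.sum_mul, Finset.mul_sum]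
          exact Finset.sum_congr rfl fun γ _ => by ring
      _ ≤ (1 + η) * (1 * w g) := by
          have := horoSum_nonneg M δ hμ g
          have := (hw0 g).le
          gcongr
          exact hμ1 g
      _ = (1 + η) * w g := by ring
  have hlower : ∀ g ∉ E, (1 - η) * w g ≤ ∑ γ ∈ μ.support, μ γ * w (γ⁻¹ * g) := by
    intro g hg
    have hgn : n ≤ M.d g 1 := by
      simp only [E, Set.Finite.mem_toFinset, Set.mem_ofPred_eq, not_le] at hg
      exact hg.le
    calc (1 - η) * w g ≤ (1 - η / 2) * ((1 - η / 2) * w g) := by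
          nlinarith [mul_nonneg (sq_nonneg η) (hw0 g).le]
      _ ≤ Real.exp (-(α * ρ)) * (horoSum M δ μ g * w g) := by
          have h1 : 0 ≤ 1 - η / 2 := by linarith
          have h2 := (hw0 g).le
          have h3 := hμn g hgn
          gcongr
      _ = ∑ γ ∈ μ.support, μ γ * (Real.exp (-(α * ρ)) * (horoKernel M δ γ g * w g)) := by
          rw [horoSum_apply, Finset.sum_mul, Finset.mul_sum]
          exact Finset.sum_congr rfl fun γ _ => by ring
      _ ≤ ∑ γ ∈ μ.support, μ γ * w (γ⁻¹ * g) :=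
          Finset.sum_le_sum fun γ hγ => mul_le_mul_of_nonneg_left
            (cutoffWeight_translate M δ hα0.le R (hρ γ hγ) g).1 (hμ γ)
  have hmass := sum_le_of_convolution_le hw hw0 hupper
  have hpos' : ∀ g, 0 ≤ ⟪π g v, v⟫ := fun g => hφ g ▸ hpos g
  have hinner := le_sum_inner_orbitSum π v hv hpos' hw (fun g => (hw0 g).le) hw1 hμ E hlower hη0.le
  set ξ := orbitSum π v w with hξ
  have hξlarge : max 0 (E.card / η) < ‖ξ‖ := by
    have hsum := inner_orbitSum_left π v hw v
    calc max 0 (E.card / η) < ∑ g ∈ A, Real.exp (-(δ - α) * M.d g 1) * φ g := hA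
      _ = ∑ g ∈ A, w g * ⟪π g v, v⟫ := Finset.sum_congr rfl fun g hg => by
          rw [hwdef, cutoffWeight_of_le M δ α (hR g hg), hφ]
      _ ≤ ⟪ξ, v⟫ := sum_le_hasSum A (fun g _ => mul_nonneg (hw0 g).le (hpos' g)) hsum
      _ ≤ ‖ξ‖ := by simpa [hv] using real_inner_le_norm ξ v
  have hξ0 : 0 < ‖ξ‖ := (le_max_left _ _).trans_lt hξlarge
  have hEξ : E.card * ‖ξ‖ ≤ η * ‖ξ‖ ^ 2 := by
    have := (le_max_right 0 (E.card / η)).trans hξlarge.le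
    rw [div_le_iff₀ hη0] at this
    nlinarith
  have hvar : ∑ γ ∈ μ.support, μ γ * ‖π γ ξ - ξ‖ ^ 2 ≤ 6 * η * ‖ξ‖ ^ 2 := by
    have : ∀ γ, μ γ * ‖π γ ξ - ξ‖ ^ 2 = μ γ * (2 * ‖ξ‖ ^ 2) - 2 * (μ γ * ⟪π γ ξ, ξ⟫) := by
      intro γ
      rw [norm_sub_sq_real, LinearIsometryEquiv.norm_map]; ring
    simp only [this]
    rw [Finset.sum_sub_distrib, ← Finset.sum_mul, ← Finset.mul_sum]
    have := mul_le_mul_of_nonneg_right hmass (show 0 ≤ 2 * ‖ξ‖ ^ 2 by positivity)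
    linarith
  refine ⟨‖ξ‖⁻¹ • ξ, ?_, fun s hs => ?_⟩
  · rw [norm_smul, norm_inv, norm_norm, inv_mul_cancel₀ hξ0.ne']
  · have hsupp : s ∈ μ.support := by
      rw [Finsupp.mem_support_iff]
      exact (hc₀.trans_le (hμS s hs)).ne'
    have h1 : c₀ * ‖π s ξ - ξ‖ ^ 2 ≤ 6 * η * ‖ξ‖ ^ 2 := by
      refine le_trans ?_ hvar
      refine (mul_le_mul_of_nonneg_right (hμS s hs) (sq_nonneg _)).trans ?_
      exact Finset.single_le_sum (f := fun γ => μ γ * ‖π γ ξ - ξ‖ ^ 2)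
        (fun γ _ => mul_nonneg (hμ γ) (sq_nonneg _)) hsupp
    have h2 : ‖π s ξ - ξ‖ < ε * ‖ξ‖ := by
      refine lt_of_pow_lt_pow_left₀ 2 (by positivity) ?_
      refine lt_of_mul_lt_mul_left ?_ hc₀.le
      have h3 : 0 < c₀ * ε ^ 2 * ‖ξ‖ ^ 2 := by positivity
      have h4 := mul_le_mul_of_nonneg_right hηc (sq_nonneg ‖ξ‖)
      rw [mul_pow]
      linarith
    rw [map_smul, ← smul_sub, norm_smul, norm_inv, norm_norm, inv_mul_lt_iff₀ hξ0]
    linarith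

section SchurTest

variable {H : Type*} [NormedAddCommGroup H] [InnerProductSpace ℝ H]

/-- A symmetric operator whose powers satisfy `⟪T ^ n ξ, ξ⟫ ≤ C L ^ n` satisfies
`‖T ξ‖ ≤ L ‖ξ‖`. -/
lemma norm_apply_le_of_inner_pow_le (T : H →L[ℝ] H) (hT : ∀ x y, ⟪T x, y⟫ = ⟪x, T y⟫) (ξ : H)
    {C L : ℝ} (hL : 0 < L) (h : ∀ n : ℕ, ⟪(T ^ n) ξ, ξ⟫ ≤ C * L ^ n) : ‖T ξ‖ ≤ L * ‖ξ‖ := by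
  have hpow : ∀ (n : ℕ) (x y : H), ⟪(T ^ n) x, y⟫ = ⟪x, (T ^ n) y⟫ := by
    intro n
    induction n with
    | zero => intro x y; simp
    | succ n ih =>
      intro x y
      rw [pow_succ, mul_apply_eq_comp, ih, hT, ← mul_apply_eq_comp,
        ← pow_succ', pow_succ]
  by_contra! hlt
  have hξ : 0 < ‖ξ‖ := by
    rw [norm_pos_iff]
    rintro rfl
    simp at hlt
  set q := ‖T ξ‖ / ‖ξ‖ with hq
  have hLq : L < q := by rwa [hq, lt_div_iff₀ hξ]
  have hq0 : 0 < q := hL.trans hLq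
  have hgrow : ∀ n : ℕ, 0 < ‖(T ^ n) ξ‖ ∧ q * ‖(T ^ n) ξ‖ ≤ ‖(T ^ (n + 1)) ξ‖ := by
    intro n
    induction n with
    | zero =>
      refine ⟨by simpa using hξ, ?_⟩
      rw [hq]
      simp [hξ.ne']
    | succ n ih =>
      have hpos : 0 < ‖(T ^ (n + 1)) ξ‖ := (mul_pos hq0 ih.1).trans_le ih.2
      refine ⟨hpos, ?_⟩
      have hconv : ‖(T ^ (n + 1)) ξ‖ ^ 2 ≤ ‖(T ^ n) ξ‖ * ‖(T ^ (n + 2)) ξ‖ := by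
        have e : ⟪(T ^ (n + 1)) ξ, (T ^ (n + 1)) ξ⟫ = ⟪(T ^ n) ξ, (T ^ (n + 2)) ξ⟫ := by
          rw [pow_succ' T n, mul_apply_eq_comp, hT, ← mul_apply_eq_comp,
            ← mul_apply_eq_comp, mul_assoc, ← pow_succ', ← pow_succ']
        rw [← real_inner_self_eq_norm_sq, e]
        exact real_inner_le_norm _ _
      refine le_of_mul_le_mul_left ?_ hpos
      calc ‖(T ^ (n + 1)) ξ‖ * (q * ‖(T ^ (n + 1)) ξ‖) = q * ‖(T ^ (n + 1)) ξ‖ ^ 2 := by ring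
        _ ≤ q * (‖(T ^ n) ξ‖ * ‖(T ^ (n + 2)) ξ‖) := by gcongr
        _ = (q * ‖(T ^ n) ξ‖) * ‖(T ^ (n + 2)) ξ‖ := by ring
        _ ≤ ‖(T ^ (n + 1)) ξ‖ * ‖(T ^ (n + 1 + 1)) ξ‖ := by gcongr; exact ih.2
  have hlow : ∀ n : ℕ, q ^ n * ‖ξ‖ ≤ ‖(T ^ n) ξ‖ := by
    intro n
    induction n with
    | zero => simp
    | succ n ih =>
      refine le_trans ?_ (hgrow n).2
      rw [pow_succ', mul_assoc]
      gcongr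
  have hone : 1 < (q / L) ^ 2 := one_lt_pow₀ ((one_lt_div hL).mpr hLq) two_ne_zero
  obtain ⟨n, hn⟩ := pow_unbounded_of_one_lt (C / ‖ξ‖ ^ 2) hone
  have h1 : (q ^ n * ‖ξ‖) ^ 2 ≤ C * L ^ (n + n) := by
    calc (q ^ n * ‖ξ‖) ^ 2 ≤ ‖(T ^ n) ξ‖ ^ 2 := by gcongr; exact hlow n
      _ = ⟪(T ^ (n + n)) ξ, ξ⟫ := by
          rw [pow_add, mul_apply_eq_comp, hpow, real_inner_self_eq_norm_sq]
      _ ≤ _ := h _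
  rw [div_lt_iff₀ (by positivity), ← pow_mul, div_pow, div_mul_eq_mul_div,
    lt_div_iff₀ (by positivity)] at hn
  have h2 : (q ^ n * ‖ξ‖) ^ 2 = q ^ (2 * n) * ‖ξ‖ ^ 2 := by ring
  rw [h2, ← two_mul] at h1
  exact absurd hn h1.not_gt

lemma map_linearCombination_orbit (π : Γ →* (H ≃ₗᵢ[ℝ] H)) (v : H) (h : Γ) (b : Γ →₀ ℝ) :
    π h (Finsupp.linearCombination ℝ (fun g => π g v) b) =
      Finsupp.linearCombination ℝ (fun g => π g v) (b.equivMapDomain (Equiv.mulLeft h)) := by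
  rw [Finsupp.linearCombination_equivMapDomain]
  simp only [Finsupp.linearCombination_apply, Finsupp.sum, map_sum, map_smul, Function.comp_apply,
    Equiv.coe_mulLeft, map_mul_orbit]

/-- A Schur test for `∑_{h ∈ B} π(h)`, where `π` is a cyclic representation with nonnegative
coefficient `g ↦ ⟪π(g) v, v⟫`. -/
lemma norm_sum_apply_le_of_schur (π : Γ →* (H ≃ₗᵢ[ℝ] H)) (v : H)
    (hcyc : Dense ((Submodule.span ℝ (Set.range fun g : Γ => π g v) : Submodule ℝ H) : Set H))
    (hpos : ∀ g, 0 ≤ ⟪π g v, v⟫) (B : Finset Γ) (hB : ∀ h ∈ B, h⁻¹ ∈ B)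
    {w : Γ → ℝ} (hw : ∀ g, 0 < w g) (hsum : ∀ k, Summable fun g => w g * ⟪π (k⁻¹ * g) v, v⟫)
    {L : ℝ} (hL0 : 0 < L) (hL : ∀ g, ∑ h ∈ B, w (h⁻¹ * g) ≤ L * w g) (x : H) :
    ‖∑ h ∈ B, π h x‖ ≤ L * ‖x‖ := by
  classical
  set T : H →L[ℝ] H := ∑ h ∈ B, ((π h).toContinuousLinearEquiv : H →L[ℝ] H) with hTdef
  have hTapply : ∀ y, T y = ∑ h ∈ B, π h y := fun y => by simp [hTdef]
  set V := Finsupp.linearCombination ℝ (fun g : Γ => π g v) with hV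
  have hTsymm : ∀ y z, ⟪T y, z⟫ = ⟪y, T z⟫ := by
    intro y z
    rw [hTapply, hTapply, sum_inner, inner_sum]
    refine Finset.sum_bij' (fun h _ => h⁻¹) (fun h _ => h⁻¹) hB hB
      (fun _ _ => inv_inv _) (fun _ _ => inv_inv _) fun h _ => ?_
    rw [← LinearIsometryEquiv.inner_map_map (π h) y, ← map_mul_orbit, mul_inv_cancel, map_one]
    rfl
  have hinner : ∀ (b : Γ →₀ ℝ) (D : ℝ), (∀ g, |b g| ≤ D * w g) → ∀ k,
      |⟪V b, π k v⟫| ≤ D * ∑' g, w g * ⟪π (k⁻¹ * g) v, v⟫ := by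
    intro b D hb k
    rw [hV, Finsupp.linearCombination_apply, Finsupp.sum, sum_inner]
    calc |∑ g ∈ b.support, ⟪b g • π g v, π k v⟫|
        ≤ ∑ g ∈ b.support, |⟪b g • π g v, π k v⟫| := Finset.abs_sum_le_sum_abs _ _
      _ ≤ ∑ g ∈ b.support, D * (w g * ⟪π (k⁻¹ * g) v, v⟫) := by
          refine Finset.sum_le_sum fun g _ => ?_
          rw [real_inner_smul_left, inner_orbit, abs_mul, abs_of_nonneg (hpos _), ← mul_assoc]
          exact mul_le_mul_of_nonneg_right (hb g) (hpos _)
      _ ≤ ∑' g, D * (w g * ⟪π (k⁻¹ * g) v, v⟫) := by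
          refine ((hsum k).mul_left D).sum_le_tsum _ fun g _ => ?_
          have hD : 0 ≤ D * w g := (abs_nonneg _).trans (hb g)
          rw [← mul_assoc]
          exact mul_nonneg hD (hpos _)
      _ = _ := tsum_mul_left
  have hspan : ∀ y ∈ Submodule.span ℝ (Set.range fun g : Γ => π g v), ‖T y‖ ≤ L * ‖y‖ := by
    intro y hy
    obtain ⟨b₀, rfl⟩ := (Finsupp.mem_span_range_iff_exists_finsupp).mp hy
    change ‖T (V b₀)‖ ≤ L * ‖V b₀‖
    have hterm : ∀ g, 0 ≤ |b₀ g| / w g := fun g => div_nonneg (abs_nonneg _) (hw g).le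
    obtain ⟨D, hb₀⟩ : ∃ D, ∀ g, |b₀ g| ≤ D * w g := by
      refine ⟨∑ g ∈ b₀.support, |b₀ g| / w g, fun g => ?_⟩
      rw [← div_le_iff₀ (hw g)]
      by_cases hg : g ∈ b₀.support
      · exact Finset.single_le_sum (f := fun g => |b₀ g| / w g) (fun g _ => hterm g) hg
      · rw [Finsupp.notMem_support_iff.mp hg]
        simpa using Finset.sum_nonneg fun g _ => hterm g
    have hpow : ∀ n : ℕ, ∃ b : Γ →₀ ℝ, (T ^ n) (V b₀) = V b ∧
        ∀ g, |b g| ≤ D * L ^ n * w g := by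
      intro n
      induction n with
      | zero => exact ⟨b₀, by simp, by simpa using hb₀⟩
      | succ n ih =>
        obtain ⟨b, hb, hbD⟩ := ih
        refine ⟨∑ h ∈ B, b.equivMapDomain (Equiv.mulLeft h), ?_, fun g => ?_⟩
        · rw [pow_succ', mul_apply_eq_comp, hb, hTapply, map_sum]
          exact Finset.sum_congr rfl fun h _ => map_linearCombination_orbit π v h b
        · rw [Finsupp.finsetSum_apply]
          have hD0 : 0 ≤ D * L ^ n := by
            have := (abs_nonneg _).trans (hbD g)
            exact nonneg_of_mul_nonneg_left this (hw g)
          calc |∑ h ∈ B, b.equivMapDomain (Equiv.mulLeft h) g|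
              ≤ ∑ h ∈ B, |b.equivMapDomain (Equiv.mulLeft h) g| :=
                Finset.abs_sum_le_sum_abs _ _
            _ ≤ ∑ h ∈ B, D * L ^ n * w (h⁻¹ * g) :=
                Finset.sum_le_sum fun h _ => by
                  simpa [Finsupp.equivMapDomain_apply] using hbD (h⁻¹ * g)
            _ = D * L ^ n * ∑ h ∈ B, w (h⁻¹ * g) := by rw [Finset.mul_sum]
            _ ≤ D * L ^ n * (L * w g) := mul_le_mul_of_nonneg_left (hL g) hD0
            _ = D * L ^ (n + 1) * w g := by ring
    refine norm_apply_le_of_inner_pow_le T hTsymm (V b₀)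
      (C := D * ∑ k ∈ b₀.support, |b₀ k| * ∑' g, w g * ⟪π (k⁻¹ * g) v, v⟫) hL0 fun n => ?_
    obtain ⟨b, hb, hbD⟩ := hpow n
    rw [hb]
    calc ⟪V b, V b₀⟫ = ∑ k ∈ b₀.support, b₀ k * ⟪V b, π k v⟫ := by
          conv_lhs => rw [hV, Finsupp.linearCombination_apply (l := b₀), Finsupp.sum, inner_sum]
          simp only [real_inner_smul_right, hV]
      _ ≤ ∑ k ∈ b₀.support, |b₀ k| * (D * L ^ n * ∑' g, w g * ⟪π (k⁻¹ * g) v, v⟫) := by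
          refine Finset.sum_le_sum fun k _ => (le_abs_self _).trans ?_
          rw [abs_mul]
          exact mul_le_mul_of_nonneg_left (hinner b _ hbD k) (abs_nonneg _)
      _ = _ := by
          rw [Finset.mul_sum, Finset.sum_mul]
          exact Finset.sum_congr rfl fun k _ => by ring
  have hclosed : IsClosed {y : H | ‖T y‖ ≤ L * ‖y‖} :=
    isClosed_le (by fun_prop) (by fun_prop)
  have hx : x ∈ {y : H | ‖T y‖ ≤ L * ‖y‖} :=
    hclosed.closure_subset_iff.mpr (fun y hy => hspan y hy) (hcyc x)
  rw [← hTapply]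
  exact hx

end SchurTest

lemma summable_exp_mul_translate (M : InvMetric Γ) {t : ℝ} (ht : 0 ≤ t) {φ : Γ → ℝ}
    (hpos : ∀ g, 0 ≤ φ g) (hs : Summable fun g => Real.exp (-t * M.d g 1) * φ g) (k : Γ) :
    Summable fun g => Real.exp (-t * M.d g 1) * φ (k⁻¹ * g) := by
  rw [← (Equiv.mulLeft k).summable_iff]
  refine (hs.mul_left (Real.exp (t * M.d k 1))).of_nonneg_of_le
    (fun g => mul_nonneg (Real.exp_pos _).le (hpos _)) fun g => ?_
  simp only [Function.comp_apply, Equiv.coe_mulLeft, inv_mul_cancel_left]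
  rw [← mul_assoc, ← Real.exp_add]
  refine mul_le_mul_of_nonneg_right (Real.exp_le_exp.mpr ?_) (hpos g)
  have h1 : M.d (k * g) 1 = M.d g k⁻¹ := by
    rw [← M.dist_inv_mul_one g k⁻¹, inv_inv]
  have h2 := M.triangle g k⁻¹ 1
  rw [M.dist_inv_one] at h2
  rw [h1]
  nlinarith

lemma le_one_of_eq_inner {H : Type*} [NormedAddCommGroup H] [InnerProductSpace ℝ H]
    (π : Γ →* (H ≃ₗᵢ[ℝ] H)) {v : H} (hv : ‖v‖ = 1) (g : Γ) : ⟪π g v, v⟫ ≤ 1 := by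
  simpa [hv] using real_inner_le_norm (π g v) v

lemma summable_exp_mul_of_growthExp_lt {M : InvMetric Γ} (hne : 0 < growthExp M) {φ : Γ → ℝ}
    (hpos : ∀ g, 0 ≤ φ g) (hφ1 : ∀ g, φ g ≤ 1) {t : ℝ} (ht : growthExp M < t) :
    Summable fun g => Real.exp (-t * M.d g 1) * φ g :=
  (M.summable_exp_of_growthExp_lt hne ht).of_nonneg_of_le
    (fun g => mul_nonneg (Real.exp_pos _).le (hpos g))
    fun g => mul_le_of_le_one_right (Real.exp_pos _).le (hφ1 g)

lemma critExp_le_growthExp {M : InvMetric Γ} (hne : 0 < growthExp M) {φ : Γ → ℝ}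
    (hpos : ∀ g, 0 ≤ φ g) (hφ1 : ∀ g, φ g ≤ 1) : critExp M φ ≤ growthExp M :=
  le_of_forall_gt_imp_ge_of_dense fun _ ht => csInf_le ⟨0, fun _ hx => hx.1⟩
    ⟨(hne.trans ht).le, summable_exp_mul_of_growthExp_lt hne hpos hφ1 ht⟩

/-- If the critical exponent of a nonnegative cyclic coefficient is less than the growth exponent,
then the representation has no almost invariant vectors. -/
theorem not_hasAlmostInvariantVectors_of_critExp_lt {M : InvMetric Γ}
    (hhyp : IsStronglyHyperbolic M) (hrg : IsRoughlyGeodesic M) (hne : 0 < growthExp M)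
    {H : Type*} [NormedAddCommGroup H] [InnerProductSpace ℝ H]
    (π : Γ →* (H ≃ₗᵢ[ℝ] H)) (v : H) (hv : ‖v‖ = 1)
    (hcyc : Dense ((Submodule.span ℝ (Set.range fun g : Γ => π g v) : Submodule ℝ H) : Set H))
    (φ : Γ → ℝ) (hφ : ∀ g, φ g = ⟪π g v, v⟫) (hpos : ∀ g, 0 ≤ φ g)
    (hcrit : critExp M φ < growthExp M) : ¬ HasAlmostInvariantVectors π := by
  intro hinv
  set δ := growthExp M with hδ
  have hφ1 : ∀ g, φ g ≤ 1 := fun g => hφ g ▸ le_one_of_eq_inner π hv g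
  have hnonempty :
      {t : ℝ | 0 ≤ t ∧ Summable fun g : Γ => Real.exp (-t * M.d g 1) * φ g}.Nonempty :=
    ⟨δ + 1, by linarith, summable_exp_mul_of_growthExp_lt hne hpos hφ1 (lt_add_one δ)⟩
  obtain ⟨t₀, ⟨-, hs₀⟩, ht₀δ⟩ := exists_lt_of_csInf_lt hnonempty hcrit
  set t := max t₀ (3 / 4 * δ)
  have htδ : t < δ := max_lt ht₀δ (by linarith)
  have htδ' : 3 / 4 * δ ≤ t := le_max_right _ _
  have ht0 : 0 < t := by linarith
  have hs : Summable fun g => Real.exp (-t * M.d g 1) * φ g := by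
    refine hs₀.of_nonneg_of_le (fun g => mul_nonneg (Real.exp_pos _).le (hpos g)) fun g => ?_
    refine mul_le_mul_of_nonneg_right (Real.exp_le_exp.mpr ?_) (hpos g)
    nlinarith [M.dist_nonneg g 1, le_max_left t₀ (3 / 4 * δ)]
  obtain ⟨K, hK, hsum⟩ := sum_horoKernel_le (t := t) (s := 5 / 4 * δ) hhyp.isHyperbolic hrg
    (by linarith) (by linarith) (M.summable_exp_of_growthExp_lt hne (by linarith))
  obtain ⟨a, hta, haδ⟩ := exists_between htδ
  obtain ⟨r, hrR, hr⟩ := M.exists_exp_lt_card_ball haδ (max 0 (Real.log (2 * K) / (a - t)))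
  have hr0 : 0 ≤ r := (le_max_left _ _).trans hrR
  have hrK : 2 * (K * Real.exp (t * r)) < Nat.card {g : Γ | M.d g 1 ≤ r} := by
    refine lt_of_le_of_lt ?_ hr
    have h1 := (le_max_right _ _).trans hrR
    rw [div_le_iff₀ (by linarith)] at h1
    rw [← mul_assoc, ← Real.exp_log (show 0 < 2 * K by positivity), ← Real.exp_add,
      Real.exp_le_exp]
    linarith
  rw [M.card_ball_eq] at hrK
  set B := (M.finiteBalls r).toFinset
  have hB : ∀ h, h ∈ B ↔ M.d h 1 ≤ r := fun h => by simp [B]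
  have hnorm := norm_sum_apply_le_of_schur π v hcyc (fun g => hφ g ▸ hpos g) B
    (fun h hh => by rw [hB, M.dist_inv_one]; exact (hB h).mp hh)
    (w := fun g => Real.exp (-t * M.d g 1)) (fun g => Real.exp_pos _)
    (fun k => by simpa only [hφ] using summable_exp_mul_translate M ht0.le hpos hs k)
    (L := K * Real.exp (t * r)) (by positivity) (fun g => by
      have h1 := hsum r r g B hr0 (fun γ hγ => (hB γ).mp hγ)
        fun γ hγ => (M.gromov_le_left γ g 1).trans ((hB γ).mp hγ)
      have e : (5 / 4 * δ - t) * r + (2 * t - 5 / 4 * δ) * r = t * r := by ring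
      rw [e] at h1
      calc ∑ h ∈ B, Real.exp (-t * M.d (h⁻¹ * g) 1)
          = (∑ h ∈ B, horoKernel M t h g) * Real.exp (-t * M.d g 1) := by
            rw [Finset.sum_mul]
            refine Finset.sum_congr rfl fun h _ => ?_
            rw [horoKernel, ← Real.exp_add, M.dist_inv_mul_one]
            congr 1; ring
        _ ≤ _ := mul_le_mul_of_nonneg_right h1 (Real.exp_pos _).le)
  obtain ⟨x, hx, hxB⟩ := hinv B (1 / 2) one_half_pos
  have h1 := hnorm x
  have h2 : ‖∑ h ∈ B, (π h x - x)‖ ≤ B.card * (1 / 2) := by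
    refine (norm_sum_le _ _).trans ((Finset.sum_le_card_nsmul _ _ _ fun h hh => (hxB h hh).le).trans
      (by simp))
  have h3 : (B.card : ℝ) = ‖∑ _h ∈ B, x‖ := by
    rw [Finset.sum_const, ← Nat.cast_smul_eq_nsmul ℝ, norm_smul, hx]
    simp
  rw [Finset.sum_sub_distrib] at h2
  have h4 := norm_sub_norm_le (∑ _h ∈ B, x) (∑ h ∈ B, π h x)
  rw [norm_sub_rev, ← h3] at h4
  rw [hx] at h1
  linarith

/-- On a non-elementary hyperbolic group with a strongly hyperbolic
invariant metric, a pointwise nonnegative positive definite function `φ` satisfies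
`δ(φ) = δ` iff its GNS representation has almost invariant vectors (`1 ≺ π_φ`);
equivalently `δ(φ) < δ` iff `π_φ` has a spectral gap (no almost invariant vectors). -/
theorem critical_gap_iff_almost_invariant [Group.FG Γ] (M : InvMetric Γ)
    (hhyp : IsStronglyHyperbolic M) (hrg : IsRoughlyGeodesic M)
    (hne : 0 < growthExp M)
    {H : Type*} [NormedAddCommGroup H] [InnerProductSpace ℝ H] [CompleteSpace H]
    (π : Γ →* (H ≃ₗᵢ[ℝ] H)) (v : H) (hv : ‖v‖ = 1)
    (hcyc : Dense ((Submodule.span ℝ (Set.range fun g : Γ => π g v) : Submodule ℝ H) : Set H))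
    (φ : Γ → ℝ) (hφ : ∀ g, φ g = ⟪π g v, v⟫) (hpos : ∀ g, 0 ≤ φ g) :
    (critExp M φ = growthExp M ↔ HasAlmostInvariantVectors π) ∧
    (critExp M φ < growthExp M ↔ ¬ HasAlmostInvariantVectors π) := by
  have hφ1 : ∀ g, φ g ≤ 1 := fun g => hφ g ▸ le_one_of_eq_inner π hv g
  have hle := critExp_le_growthExp hne hpos hφ1
  have hgap := not_hasAlmostInvariantVectors_of_critExp_lt hhyp hrg hne π v hv hcyc φ hφ hpos
  have hinv := hasAlmostInvariantVectors_of_growthExp_le_critExp hhyp hrg hne π v hv φ hφ hpos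
  refine ⟨⟨fun h => hinv h.ge, fun h => ?_⟩, ⟨hgap, fun h => ?_⟩⟩
  · exact hle.eq_of_not_lt fun hlt => hgap hlt h
  · exact lt_of_not_ge fun hge => h (hinv hge)
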